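/- Define BST insertion by `insert k nil = node nil k nil` and `insert k (node l a r) = if k < a then node (insert k l) a r else node l a (insert k r)`, and define the attachment parent by `parent k (node l a r) = if k < a then (if l = nil then a else parent k l) else (if r = nil then a else parent k r)`. Let t be a nonempty binary search tree and k a key not occurring in t. Then in the in-order traversal of `insert k t`, the key k and the key `parent k t` occupy adjacent positions. -/

import Mathlib

/-- Binary trees over a type `α`. -/
inductive BTree (α : Type*) where
  | nil : BTree α
  | node (l : BTree α) (a : α) (r : BTree α) : BTree α
  deriving DecidableEq

namespace BTree

variable {α : Type*}

/-- In-order traversal. -/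
def inorder : BTree α → List α
  | nil => []
  | node l a r => inorder l ++ [a] ++ inorder r

/-- Key membership in a tree. -/
def Mem : BTree α → α → Prop
  | nil, _ => False
  | node l a r, x => Mem l x ∨ x = a ∨ Mem r x

/-- `IsSubtree s t` means `s` occurs as a subtree of `t`. -/
inductive IsSubtree : BTree α → BTree α → Prop
  | refl (t : BTree α) : IsSubtree t t
  | left {s l r : BTree α} {a : α} : IsSubtree s l → IsSubtree s (node l a r)
  | right {s l r : BTree α} {a : α} : IsSubtree s r → IsSubtree s (node l a r)

/-- `x` and `y` occupy adjacent positions in the list `L` (`x` immediately before `y`). -/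
def Adjacent (L : List α) (x y : α) : Prop :=
  ∃ i : ℕ, L[i]? = some x ∧ L[i + 1]? = some y

variable [LinearOrder α]

/-- The binary-search-tree property: at every node, all keys of the left subtree are
smaller than the root key and all keys of the right subtree are larger. -/
def IsBST : BTree α → Prop
  | nil => True
  | node l a r => (∀ x, Mem l x → x < a) ∧ (∀ x, Mem r x → a < x) ∧ IsBST l ∧ IsBST r

/-- `Ancestor t x y`: the key `x` is an ancestor of the key `y` in `t`, i.e. `y` occurs
in a proper subtree of the subtree of `t` rooted at `x`. -/
def Ancestor (t : BTree α) (x y : α) : Prop :=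
  ∃ l r : BTree α, IsSubtree (node l x r) t ∧ (Mem l y ∨ Mem r y)

/-- Depth (number of edges from the root) of a key in a binary search tree,
computed by the standard search path. -/
def depth : BTree α → α → ℕ
  | nil, _ => 0
  | node l a r, x => if x = a then 0 else if x < a then depth l x + 1 else depth r x + 1

/-- Standard BST insertion. -/
def insert (k : α) : BTree α → BTree α
  | nil => node nil k nil
  | node l a r => if k < a then node (insert k l) a r else node l a (insert k r)

/-- The key of the node to which a fresh key `k` gets attached. -/
def parent? (k : α) : BTree α → Option α
  | nil => none
  | node l a r =>
      if k < a then (if l = nil then some a else parent? k l)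
      else (if r = nil then some a else parent? k r)

theorem adjacent_append_cons_cons {β : Type*} (L R : List β) (x y : β) :
    Adjacent (L ++ x :: y :: R) x y :=
  ⟨L.length, by simp, by simp⟩

theorem inorder_insert_node_of_lt {k a : α} (l r : BTree α) (hka : k < a) :
    inorder (insert k (node l a r)) = inorder (insert k l) ++ a :: inorder r := by
  simp [insert, inorder, hka]

theorem inorder_insert_node_of_le {k a : α} (l r : BTree α) (hak : a ≤ k) :
    inorder (insert k (node l a r)) = inorder l ++ a :: inorder (insert k r) := by
  simp [insert, inorder, hak.not_gt]

theorem exists_parent?_eq_some {t : BTree α} (hne : t ≠ nil) (k : α) :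
    ∃ p, parent? k t = some p := by
  fun_induction parent? k t with
  | case1 => exact absurd rfl hne
  | case2 | case4 => exact ⟨_, rfl⟩
  | case3 _ _ _ _ hl ih => exact ih hl
  | case5 _ _ _ _ hr ih => exact ih hr

theorem inorder_insert_of_parent?_eq_some {t : BTree α} {k p : α} (hp : parent? k t = some p) :
    ∃ L R, inorder t = L ++ p :: R ∧
      (inorder (insert k t) = L ++ k :: p :: R ∨ inorder (insert k t) = L ++ p :: k :: R) := by
  fun_induction parent? k t with
  | case1 => contradiction
  | case2 a r hka =>
    obtain rfl : a = p := Option.some.inj hp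
    exact ⟨[], inorder r, rfl, .inl (inorder_insert_node_of_lt nil r hka)⟩
  | case3 l a r hka _ ih =>
    obtain ⟨L, R, hl, hins⟩ := ih hp
    rw [inorder_insert_node_of_lt l r hka]
    refine ⟨L, R ++ a :: inorder r, by simp [inorder, hl], ?_⟩
    exact hins.imp (by simp [·]) (by simp [·])
  | case4 l a hka =>
    obtain rfl : a = p := Option.some.inj hp
    refine ⟨inorder l, [], by simp [inorder], .inr ?_⟩
    exact inorder_insert_node_of_le l nil (not_lt.mp hka)
  | case5 l a r hka _ ih =>
    obtain ⟨L, R, hr, hins⟩ := ih hp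
    rw [inorder_insert_node_of_le l r (not_lt.mp hka)]
    refine ⟨inorder l ++ a :: L, R, by simp [inorder, hr], ?_⟩
    exact hins.imp (by simp [·]) (by simp [·])

theorem insert_adjacent_parent_general (t : BTree α) (hne : t ≠ nil) (k : α) :
    ∃ p : α, parent? k t = some p ∧
      (Adjacent (inorder (insert k t)) k p ∨ Adjacent (inorder (insert k t)) p k) := by
  obtain ⟨p, hp⟩ := exists_parent?_eq_some hne k
  obtain ⟨L, R, -, hins⟩ := inorder_insert_of_parent?_eq_some hp
  refine ⟨p, hp, hins.imp (fun h => ?_) (fun h => ?_)⟩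
  · exact h ▸ adjacent_append_cons_cons L R k p
  · exact h ▸ adjacent_append_cons_cons L R p k

/-- inserting a fresh key `k` into a nonempty BST puts `k` immediately to
the left or to the right of its attachment parent in the in-order traversal. -/
theorem insert_adjacent_parent (t : BTree α) (ht : IsBST t) (hne : t ≠ nil)
    (k : α) (hk : ¬ Mem t k) :
    ∃ p : α, parent? k t = some p ∧
      (Adjacent (inorder (insert k t)) k p ∨ Adjacent (inorder (insert k t)) p k) :=
  insert_adjacent_parent_general t hne k

end BTree
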